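/- Let 1 < p < ∞. If w ∈ A_p, then there exists ε with 0 < ε < p − 1 such that w ∈ A_{p−ε}. -/

import Mathlib

open MeasureTheory ENNReal
open scoped Classical

noncomputable section

variable {n : ℕ}

/-- An axis-parallel half-open cube in `ℝⁿ`. -/
def IsCube (Q : Set (Fin n → ℝ)) : Prop :=
  ∃ (a : Fin n → ℝ) (l : ℝ), 0 < l ∧ Q = {x | ∀ i, a i ≤ x i ∧ x i < a i + l}

/-- The average `⨍_Q f` of an `ℝ≥0∞`-valued function over a set, w.r.t. Lebesgue measure. -/
def eavg (Q : Set (Fin n → ℝ)) (f : (Fin n → ℝ) → ℝ≥0∞) : ℝ≥0∞ :=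
  (∫⁻ x in Q, f x) / volume Q

/-- A weight: measurable, a.e. positive and finite, and locally integrable. -/
def IsWeight (w : (Fin n → ℝ) → ℝ≥0∞) : Prop :=
  Measurable w ∧ (∀ᵐ x ∂(volume : Measure (Fin n → ℝ)), 0 < w x ∧ w x < ∞) ∧
    ∀ Q : Set (Fin n → ℝ), IsCube Q → ∫⁻ x in Q, w x < ∞

/-- The Muckenhoupt `A_p` constant, `1 ≤ p < ∞` (ess-sup form when `p = 1`). -/
def ApConst (p : ℝ) (w : (Fin n → ℝ) → ℝ≥0∞) : ℝ≥0∞ :=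
  if p = 1 then
    ⨆ (Q : Set (Fin n → ℝ)) (_ : IsCube Q),
      essSup (fun x => eavg Q w / w x) (volume.restrict Q)
  else
    ⨆ (Q : Set (Fin n → ℝ)) (_ : IsCube Q),
      eavg Q w * (eavg Q fun x => w x ^ (1 - p / (p - 1))) ^ (p - 1)

/-- Membership in the Muckenhoupt class `A_p`. -/
def MemAp (p : ℝ) (w : (Fin n → ℝ) → ℝ≥0∞) : Prop := ApConst p w < ∞

/-- The reverse Hölder `RH_s` constant. -/
def RHConst (s : ℝ) (w : (Fin n → ℝ) → ℝ≥0∞) : ℝ≥0∞ :=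
  ⨆ (Q : Set (Fin n → ℝ)) (_ : IsCube Q),
    (eavg Q fun x => w x ^ s) ^ (1 / s) / eavg Q w

/-- Membership in the reverse Hölder class `RH_s`. -/
def MemRH (s : ℝ) (w : (Fin n → ℝ) → ℝ≥0∞) : Prop := RHConst s w < ∞

/-- The `RH_∞` constant. -/
def RHInfConst (w : (Fin n → ℝ) → ℝ≥0∞) : ℝ≥0∞ :=
  ⨆ (Q : Set (Fin n → ℝ)) (_ : IsCube Q),
    essSup (fun x => w x / eavg Q w) (volume.restrict Q)

/-- Membership in `RH_∞`. -/
def MemRHInf (w : (Fin n → ℝ) → ℝ≥0∞) : Prop := RHInfConst w < ∞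

/-- The Hardy–Littlewood maximal operator (over all cubes containing `x`). -/
def maximal (f : (Fin n → ℝ) → ℝ) (x : Fin n → ℝ) : ℝ≥0∞ :=
  ⨆ (Q : Set (Fin n → ℝ)) (_ : IsCube Q) (_ : x ∈ Q),
    eavg Q fun y => ENNReal.ofReal |f y|

/-- The Hardy–Littlewood maximal operator acting on `ℝ≥0∞`-valued functions. -/
def emaximal (f : (Fin n → ℝ) → ℝ≥0∞) (x : Fin n → ℝ) : ℝ≥0∞ :=
  ⨆ (Q : Set (Fin n → ℝ)) (_ : IsCube Q) (_ : x ∈ Q), eavg Q f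

/-- The norm `‖f‖_{L^p(w)} = (∫ f^p w dx)^(1/p)`. -/
def wLpNorm (p : ℝ) (w f : (Fin n → ℝ) → ℝ≥0∞) : ℝ≥0∞ :=
  (∫⁻ x, f x ^ p * w x) ^ (1 / p)

/-!
For `w ∈ A_p`, the dual weight `σ = w ^ (1 - p')` belongs to `A_{p'}`. If `σ` satisfies a reverse
Hölder inequality with exponent `s > 1`, then `(⨍_Q σ ^ s) ^ (1 / s)` may replace `⨍_Q σ` in the
`A_p` condition of `w`, and the result is precisely the `A_q` condition with `q - 1 = (p - 1) / s`.

Every Muckenhoupt weight `f` satisfies such an inequality. Hölder's inequality and the `A_p`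
condition show that a subset of at most half the measure of a cube carries at most a fraction
`β < 1` of the `f`-mass of the cube. In a dyadic cube `Q`, stop at the maximal dyadic subcubes on
which the average of `f` exceeds `2 ⨍_Q f`. They have total measure at most `|Q| / 2`, hence
`f`-mass at most `β ∫_Q f`, while the average of `f` on each of them is at most `2 ^ (n + 1) ⨍_Q f`.
Let `f_m` be the average of `f` over dyadic cubes of generation `m`. By induction from fine to
coarse cubes, `∫_Q f_m ^ (1 + δ) ≤ C (⨍_Q f) ^ δ ∫_Q f` as soon as
`C (2 ^ (n + 1)) ^ δ β + 2 ^ δ ≤ C`, which can be arranged for small `δ`. As `C` does not depend on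
`m`, Lebesgue differentiation and Fatou's lemma give the reverse Hölder inequality.
-/

/-! ### Nested partitions and stopping cells -/

/-- The set `Q` satisfies the quantitative `A_∞` condition for the density `f`: a subset carrying
at most the fraction `1 / c` of the measure of `Q` carries at most the fraction `β` of the
integral of `f`. -/
def AInftyOn {X : Type*} [MeasurableSpace X] (μ : Measure X) (f : X → ℝ≥0∞) (c β : ℝ≥0∞)
    (Q : Set X) : Prop :=
  ∀ E ⊆ Q, MeasurableSet E → c * μ E ≤ μ Q → ∫⁻ x in E, f x ∂μ ≤ β * ∫⁻ x in Q, f x ∂μ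

/-- A sequence of measurable partitions of `X`, each refining the previous one; the model case is
a dyadic grid. The `k`-th partition is encoded by the map `index k`, which sends a point to the
label of its cell. -/
structure NestedPartition (X ι : Type*) [MeasurableSpace X] where
  index : ℕ → X → ι
  measurableSet_fiber : ∀ k j, MeasurableSet (index k ⁻¹' {j})
  index_eq_of_succ : ∀ {k x y}, index (k + 1) y = index (k + 1) x → index k y = index k x

namespace NestedPartition

variable {X ι : Type*} [MeasurableSpace X] (P : NestedPartition X ι) {μ : Measure X}
  {f g : X → ℝ≥0∞} {c C D t β : ℝ≥0∞} {δ : ℝ} {S : Set X} {j k m : ℕ} {x y : X}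

/-- The cell of the `k`-th partition that contains `x`. -/
def cell (k : ℕ) (x : X) : Set X := P.index k ⁻¹' {P.index k x}

lemma measurableSet_cell (k : ℕ) (x : X) : MeasurableSet (P.cell k x) :=
  P.measurableSet_fiber _ _

lemma mem_cell_self (k : ℕ) (x : X) : x ∈ P.cell k x := rfl

lemma cell_eq_of_mem (h : y ∈ P.cell k x) : P.cell k y = P.cell k x := by
  rw [cell, cell, show P.index k y = P.index k x from h]

lemma antitone_cell (x : X) : Antitone (P.cell · x) :=
  antitone_nat_of_succ_le fun _ _ h => P.index_eq_of_succ h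

/-- The average of `f` over the cell of generation `k` that contains `x`, i.e. the conditional
expectation of `f` on the `k`-th partition. -/
def cellAverage (μ : Measure X) (f : X → ℝ≥0∞) (k : ℕ) (x : X) : ℝ≥0∞ :=
  ⨍⁻ y in P.cell k x, f y ∂μ

lemma cellAverage_eq_of_mem (h : y ∈ P.cell k x) :
    P.cellAverage μ f k y = P.cellAverage μ f k x := by
  rw [cellAverage, cellAverage, P.cell_eq_of_mem h]

lemma cellAverage_succ_le (hμ : μ (P.cell k x) ≠ ∞)
    (hD : μ (P.cell k x) ≤ D * μ (P.cell (k + 1) x)) :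
    P.cellAverage μ f (k + 1) x ≤ D * P.cellAverage μ f k x := by
  rw [cellAverage, setLAverage_eq]
  refine ENNReal.div_le_of_le_mul ?_
  calc ∫⁻ y in P.cell (k + 1) x, f y ∂μ ≤ ∫⁻ y in P.cell k x, f y ∂μ :=
        lintegral_mono_set (P.antitone_cell x k.le_succ)
    _ = μ (P.cell k x) * P.cellAverage μ f k x := (measure_mul_setLAverage f hμ).symm
    _ ≤ D * μ (P.cell (k + 1) x) * P.cellAverage μ f k x := by gcongr
    _ = D * P.cellAverage μ f k x * μ (P.cell (k + 1) x) := by ring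

lemma setLIntegral_cellAverage_self (hμ : μ (P.cell k x) ≠ ∞) :
    ∫⁻ y in P.cell k x, P.cellAverage μ f k y ∂μ = ∫⁻ y in P.cell k x, f y ∂μ := by
  rw [setLIntegral_congr_fun (P.measurableSet_cell k x) fun y hy => P.cellAverage_eq_of_mem hy,
    setLIntegral_const, mul_comm]
  exact measure_mul_setLAverage f hμ

/-- The points of `P.cell k x` at which some average of `f` over a cell of generation between `k`
and `m` exceeds `t`: the union of the Calderón–Zygmund stopping cells at height `t`, truncated at
generation `m`. -/
def stoppingSet (μ : Measure X) (f : X → ℝ≥0∞) (t : ℝ≥0∞) (k m : ℕ) (x : X) : Set X :=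
  {y ∈ P.cell k x | ∃ j ∈ Set.Icc k m, t < P.cellAverage μ f j y}

lemma stoppingSet_subset_cell : P.stoppingSet μ f t k m x ⊆ P.cell k x := fun _ hy => hy.1

lemma cell_subset_stoppingSet (hy : y ∈ P.cell k x) (hj : j ∈ Set.Icc k m)
    (ht : t < P.cellAverage μ f j y) : P.cell j y ⊆ P.stoppingSet μ f t k m x := fun z hz =>
  ⟨P.cell_eq_of_mem hy ▸ P.antitone_cell y hj.1 hz, j, hj, by rwa [P.cellAverage_eq_of_mem hz]⟩

lemma exists_stopping_generation (hμ : ∀ k x, μ (P.cell k x) ≠ ∞)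
    (hD : ∀ k x, μ (P.cell k x) ≤ D * μ (P.cell (k + 1) x)) (ht : P.cellAverage μ f k x ≤ t)
    (hy : y ∈ P.stoppingSet μ f t k m x) :
    ∃ j ∈ Set.Ioc k m, t < P.cellAverage μ f j y ∧ P.cellAverage μ f j y ≤ D * t := by
  obtain ⟨hyx, hj⟩ := hy
  obtain ⟨⟨hkj, hjm⟩, htj⟩ := Nat.find_spec hj
  set j := Nat.find hj with hj_def
  have hkj' : k ≠ j := by
    rintro h
    rw [← h, P.cellAverage_eq_of_mem hyx] at htj
    exact htj.not_ge ht
  obtain ⟨i, hi⟩ : ∃ i, j = i + 1 := Nat.exists_eq_succ_of_ne_zero (by omega)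
  have hti : P.cellAverage μ f i y ≤ t :=
    not_lt.1 fun h => Nat.find_min hj (m := i) (by omega) ⟨⟨by omega, by omega⟩, h⟩
  refine ⟨j, ⟨by omega, hjm⟩, htj, ?_⟩
  rw [hi]
  exact (P.cellAverage_succ_le (hμ i y) (hD i y)).trans (by gcongr)

variable [Countable ι]

lemma countable_cells : {R | ∃ k x, R = P.cell k x}.Countable := by
  refine (Set.countable_range fun q : ℕ × ι => P.index q.1 ⁻¹' {q.2}).mono ?_
  rintro _ ⟨k, x, rfl⟩
  exact ⟨(k, P.index k x), rfl⟩

lemma measurable_cellAverage (k : ℕ) : Measurable (P.cellAverage μ f k) := by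
  let _ : MeasurableSpace ι := ⊤
  have h_index : Measurable (P.index k) := measurable_to_countable' (P.measurableSet_fiber k)
  exact (measurable_from_top (f := fun j => ⨍⁻ y in P.index k ⁻¹' {j}, f y ∂μ)).comp h_index

lemma exists_pairwiseDisjoint_cells {p : Set X → Prop}
    (h : ∀ x ∈ S, ∃ k, P.cell k x ⊆ S ∧ p (P.cell k x)) :
    ∃ 𝒞 : Set (Set X), 𝒞.Countable ∧ 𝒞.PairwiseDisjoint id ∧
      (∀ R ∈ 𝒞, MeasurableSet R ∧ p R) ∧ ⋃ R ∈ 𝒞, id R = S := by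
  let good (R : Set X) : Prop := R ⊆ S ∧ p R
  -- The maximal good cells: two cells that meet are nested, so distinct maximal ones are disjoint.
  let 𝒞 : Set (Set X) :=
    {R | ∃ k x, R = P.cell k x ∧ good (P.cell k x) ∧ ∀ j < k, ¬ good (P.cell j x)}
  refine ⟨𝒞, P.countable_cells.mono ?_, ?_, ?_, ?_⟩
  · rintro R ⟨k, x, rfl, -⟩
    exact ⟨k, x, rfl⟩
  · rintro _ ⟨k, x, rfl, hx, hkx⟩ _ ⟨m, y, rfl, hy, hmy⟩ hne
    refine Set.disjoint_left.2 fun z hzx hzy => hne ?_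
    have hx_eq {j : ℕ} (hj : j ≤ k) : P.cell j z = P.cell j x :=
      P.cell_eq_of_mem (P.antitone_cell x hj hzx)
    have hy_eq {j : ℕ} (hj : j ≤ m) : P.cell j z = P.cell j y :=
      P.cell_eq_of_mem (P.antitone_cell y hj hzy)
    rcases lt_trichotomy k m with hkm | rfl | hmk
    · exact absurd hx (by simpa only [← hx_eq le_rfl, hy_eq hkm.le] using hmy k hkm)
    · exact (hx_eq le_rfl).symm.trans (hy_eq le_rfl)
    · exact absurd hy (by simpa only [← hy_eq le_rfl, hx_eq hmk.le] using hkx m hmk)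
  · rintro R ⟨k, x, rfl, hx, -⟩
    exact ⟨P.measurableSet_cell k x, hx.2⟩
  · refine Set.Subset.antisymm (Set.iUnion₂_subset ?_) fun x hx => ?_
    · rintro R ⟨k, x, rfl, hx, -⟩
      exact hx.1
    · exact Set.mem_biUnion ⟨Nat.find (h x hx), x, rfl, Nat.find_spec (h x hx),
        fun j => Nat.find_min (h x hx)⟩ (P.mem_cell_self _ x)

lemma measurableSet_of_forall_exists_cell_subset (h : ∀ x ∈ S, ∃ k, P.cell k x ⊆ S) :
    MeasurableSet S := by
  obtain ⟨𝒞, h_count, -, h_meas, rfl⟩ :=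
    P.exists_pairwiseDisjoint_cells (p := fun _ => True) fun x hx => by simpa using h x hx
  exact MeasurableSet.biUnion h_count fun R hR => (h_meas R hR).1

lemma setLIntegral_le_of_forall_exists_cell (h : ∀ x ∈ S, ∃ k, P.cell k x ⊆ S ∧
      ∫⁻ y in P.cell k x, f y ∂μ ≤ ∫⁻ y in P.cell k x, g y ∂μ) :
    ∫⁻ x in S, f x ∂μ ≤ ∫⁻ x in S, g x ∂μ := by
  obtain ⟨𝒞, h_count, h_disj, h𝒞, rfl⟩ := P.exists_pairwiseDisjoint_cells
    (p := fun R => ∫⁻ y in R, f y ∂μ ≤ ∫⁻ y in R, g y ∂μ) h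
  have h_meas : ∀ R ∈ 𝒞, MeasurableSet (id R) := fun R hR => (h𝒞 R hR).1
  rw [lintegral_biUnion h_count h_meas h_disj, lintegral_biUnion h_count h_meas h_disj]
  exact ENNReal.tsum_le_tsum fun R => (h𝒞 R R.2).2

lemma setLIntegral_cellAverage (hμ : ∀ k x, μ (P.cell k x) ≠ ∞) (hkm : k ≤ m) :
    ∫⁻ y in P.cell k x, P.cellAverage μ f m y ∂μ = ∫⁻ y in P.cell k x, f y ∂μ := by
  have h_sub : ∀ y ∈ P.cell k x, P.cell m y ⊆ P.cell k x := fun y hy =>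
    (P.antitone_cell y hkm).trans (P.cell_eq_of_mem hy).le
  exact le_antisymm
    (P.setLIntegral_le_of_forall_exists_cell fun y hy =>
      ⟨m, h_sub y hy, (P.setLIntegral_cellAverage_self (hμ m y)).le⟩)
    (P.setLIntegral_le_of_forall_exists_cell fun y hy =>
      ⟨m, h_sub y hy, (P.setLIntegral_cellAverage_self (hμ m y)).ge⟩)

lemma measurableSet_stoppingSet : MeasurableSet (P.stoppingSet μ f t k m x) :=
  P.measurableSet_of_forall_exists_cell_subset fun _ ⟨hy, j, hj, ht⟩ =>
    ⟨j, P.cell_subset_stoppingSet hy hj ht⟩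

lemma mul_measure_stoppingSet_le (hμ : ∀ k x, μ (P.cell k x) ≠ ∞) :
    t * μ (P.stoppingSet μ f t k m x) ≤ ∫⁻ y in P.stoppingSet μ f t k m x, f y ∂μ := by
  rw [← setLIntegral_const]
  refine P.setLIntegral_le_of_forall_exists_cell fun y ⟨hy, j, hj, ht⟩ =>
    ⟨j, P.cell_subset_stoppingSet hy hj ht, ?_⟩
  rw [setLIntegral_const, ← measure_mul_setLAverage f (hμ j y), mul_comm]
  gcongr
  exact ht.le

lemma setLIntegral_stoppingSet_le (hμ : ∀ k x, μ (P.cell k x) ≠ ∞) (hc : c ≠ 0)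
    (hf : AInftyOn μ f c β (P.cell k x)) :
    ∫⁻ y in P.stoppingSet μ f (c * P.cellAverage μ f k x) k m x, f y ∂μ ≤
      β * ∫⁻ y in P.cell k x, f y ∂μ := by
  set A := P.cellAverage μ f k x
  set E := P.stoppingSet μ f (c * A) k m x with hE
  have hA : μ (P.cell k x) * A = ∫⁻ y in P.cell k x, f y ∂μ := measure_mul_setLAverage f (hμ k x)
  have h_mono : ∫⁻ y in E, f y ∂μ ≤ ∫⁻ y in P.cell k x, f y ∂μ :=
    lintegral_mono_set P.stoppingSet_subset_cell
  rcases eq_or_ne A 0 with hA₀ | hA₀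
  · rw [← hA, hA₀, mul_zero] at h_mono
    exact h_mono.trans zero_le
  rcases eq_or_ne A ∞ with hA_top | hA_top
  · have : E = ∅ := by simp [hE, hA_top, ENNReal.mul_top hc, stoppingSet]
    simp [this]
  refine hf E P.stoppingSet_subset_cell P.measurableSet_stoppingSet ?_
  refine (ENNReal.mul_le_mul_iff_left hA₀ hA_top).1 ?_
  calc c * μ E * A = c * A * μ E := by ring
    _ ≤ ∫⁻ y in E, f y ∂μ := P.mul_measure_stoppingSet_le hμ
    _ ≤ μ (P.cell k x) * A := h_mono.trans hA.ge

lemma setLIntegral_rpow_diff_stoppingSet_le (hμ : ∀ k x, μ (P.cell k x) ≠ ∞) (hδ : 0 ≤ δ)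
    (hkm : k ≤ m) :
    ∫⁻ y in P.cell k x \ P.stoppingSet μ f t k m x, P.cellAverage μ f m y ^ (1 + δ) ∂μ ≤
      t ^ δ * ∫⁻ y in P.cell k x, f y ∂μ := by
  have h_le : ∀ y ∈ P.cell k x \ P.stoppingSet μ f t k m x, P.cellAverage μ f m y ≤ t :=
    fun y hy => not_lt.1 fun ht => hy.2 ⟨hy.1, m, ⟨hkm, le_rfl⟩, ht⟩
  calc ∫⁻ y in P.cell k x \ P.stoppingSet μ f t k m x, P.cellAverage μ f m y ^ (1 + δ) ∂μ
      ≤ ∫⁻ y in P.cell k x \ P.stoppingSet μ f t k m x, t ^ δ * P.cellAverage μ f m y ∂μ := by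
        refine setLIntegral_mono' ((P.measurableSet_cell k x).diff P.measurableSet_stoppingSet)
          fun y hy => ?_
        rw [ENNReal.rpow_add_of_nonneg _ _ zero_le_one hδ, ENNReal.rpow_one, mul_comm]
        gcongr
        exact h_le y hy
    _ ≤ ∫⁻ y in P.cell k x, t ^ δ * P.cellAverage μ f m y ∂μ :=
        lintegral_mono_set Set.sdiff_subset
    _ = t ^ δ * ∫⁻ y in P.cell k x, f y ∂μ := by
        rw [lintegral_const_mul _ (P.measurable_cellAverage m), P.setLIntegral_cellAverage hμ hkm]

lemma setLIntegral_rpow_stoppingSet_le (hμ : ∀ k x, μ (P.cell k x) ≠ ∞)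
    (hD : ∀ k x, μ (P.cell k x) ≤ D * μ (P.cell (k + 1) x)) (hf : Measurable f) (hδ : 0 ≤ δ)
    (ht : P.cellAverage μ f k x ≤ t)
    (h_cell : ∀ j ∈ Set.Ioc k m, ∀ y, ∫⁻ z in P.cell j y, P.cellAverage μ f m z ^ (1 + δ) ∂μ ≤
      C * P.cellAverage μ f j y ^ δ * ∫⁻ z in P.cell j y, f z ∂μ) :
    ∫⁻ y in P.stoppingSet μ f t k m x, P.cellAverage μ f m y ^ (1 + δ) ∂μ ≤
      C * (D * t) ^ δ * ∫⁻ y in P.stoppingSet μ f t k m x, f y ∂μ := by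
  rw [← lintegral_const_mul _ hf]
  refine P.setLIntegral_le_of_forall_exists_cell fun y hy => ?_
  obtain ⟨j, hj, htj, hjD⟩ := P.exists_stopping_generation hμ hD ht hy
  refine ⟨j, P.cell_subset_stoppingSet hy.1 ⟨hj.1.le, hj.2⟩ htj, ?_⟩
  rw [lintegral_const_mul _ hf]
  exact (h_cell j hj y).trans (by gcongr)

theorem setLIntegral_cellAverage_rpow_le (hμ : ∀ k x, μ (P.cell k x) ≠ ∞)
    (hD : ∀ k x, μ (P.cell k x) ≤ D * μ (P.cell (k + 1) x)) (hf : Measurable f) (hδ : 0 ≤ δ)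
    (hc : 1 ≤ c) (hfA : ∀ k x, AInftyOn μ f c β (P.cell k x))
    (hC : C * ((D * c) ^ δ * β) + c ^ δ ≤ C) (hkm : k ≤ m) :
    ∫⁻ y in P.cell k x, P.cellAverage μ f m y ^ (1 + δ) ∂μ ≤
      C * P.cellAverage μ f k x ^ δ * ∫⁻ y in P.cell k x, f y ∂μ := by
  induction hi : m - k using Nat.strong_induction_on generalizing k x with
  | _ i ih =>
    set A := P.cellAverage μ f k x
    set E := P.stoppingSet μ f (c * A) k m x
    set I := ∫⁻ y in P.cell k x, f y ∂μ
    have h_good := P.setLIntegral_rpow_diff_stoppingSet_le hμ hδ hkm (f := f) (x := x) (t := c * A)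
    have h_bad := P.setLIntegral_rpow_stoppingSet_le hμ hD hf hδ (k := k) (x := x) (C := C)
      (le_mul_of_one_le_left' hc) fun j ⟨hkj, hjm⟩ y => ih (m - j) (by omega) hjm rfl
    have h_mass := P.setLIntegral_stoppingSet_le (m := m) hμ (one_pos.trans_le hc).ne' (hfA k x)
    calc ∫⁻ y in P.cell k x, P.cellAverage μ f m y ^ (1 + δ) ∂μ
        = (∫⁻ y in E, P.cellAverage μ f m y ^ (1 + δ) ∂μ) +
            ∫⁻ y in P.cell k x \ E, P.cellAverage μ f m y ^ (1 + δ) ∂μ := by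
          rw [← lintegral_inter_add_sdiff _ (P.cell k x) P.measurableSet_stoppingSet,
            Set.inter_eq_right.2 P.stoppingSet_subset_cell]
      _ ≤ C * (D * (c * A)) ^ δ * (β * I) + (c * A) ^ δ * I :=
          add_le_add (h_bad.trans (by gcongr)) h_good
      _ = (C * ((D * c) ^ δ * β) + c ^ δ) * A ^ δ * I := by
          rw [← mul_assoc D, ENNReal.mul_rpow_of_nonneg _ A hδ, ENNReal.mul_rpow_of_nonneg _ A hδ]
          ring
      _ ≤ C * A ^ δ * I := by gcongr

theorem setLAverage_rpow_le (hμ : ∀ k x, μ (P.cell k x) ≠ ∞)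
    (hD : ∀ k x, μ (P.cell k x) ≤ D * μ (P.cell (k + 1) x)) (hf : Measurable f) (hδ : 0 ≤ δ)
    (hc : 1 ≤ c) (hfA : ∀ k x, AInftyOn μ f c β (P.cell k x))
    (hC : C * ((D * c) ^ δ * β) + c ^ δ ≤ C)
    (h_lim : ∀ᵐ y ∂μ, Filter.Tendsto (P.cellAverage μ f · y) Filter.atTop (nhds (f y))) :
    ⨍⁻ y in P.cell k x, f y ^ (1 + δ) ∂μ ≤ C * (⨍⁻ y in P.cell k x, f y ∂μ) ^ (1 + δ) := by
  have h_liminf : ∀ᵐ y ∂μ.restrict (P.cell k x), f y ^ (1 + δ) =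
      Filter.liminf (fun m => P.cellAverage μ f m y ^ (1 + δ)) Filter.atTop := by
    filter_upwards [ae_restrict_of_ae h_lim] with y hy
    exact (((ENNReal.continuous_rpow_const.tendsto _).comp hy).liminf_eq).symm
  rw [setLAverage_eq]
  refine ENNReal.div_le_of_le_mul ?_
  calc ∫⁻ y in P.cell k x, f y ^ (1 + δ) ∂μ
      = ∫⁻ y in P.cell k x,
          Filter.liminf (fun m => P.cellAverage μ f m y ^ (1 + δ)) Filter.atTop ∂μ :=
        lintegral_congr_ae h_liminf
    _ ≤ Filter.liminf (fun m => ∫⁻ y in P.cell k x, P.cellAverage μ f m y ^ (1 + δ) ∂μ)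
          Filter.atTop :=
        lintegral_liminf_le fun m => (P.measurable_cellAverage m).pow_const _
    _ ≤ C * P.cellAverage μ f k x ^ δ * ∫⁻ y in P.cell k x, f y ∂μ :=
        Filter.liminf_le_of_frequently_le' <| Filter.Eventually.frequently <|
          (Filter.eventually_ge_atTop k).mono fun m hkm =>
            P.setLIntegral_cellAverage_rpow_le hμ hD hf hδ hc hfA hC hkm
    _ = C * P.cellAverage μ f k x ^ (1 + δ) * μ (P.cell k x) := by
        rw [← measure_mul_setLAverage f (hμ k x), ENNReal.rpow_add_of_nonneg _ _ zero_le_one hδ,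
          ENNReal.rpow_one, cellAverage]
        ring

end NestedPartition

lemma exists_pos_mul_rpow_mul_add_rpow_le {b c β : ℝ≥0∞} (hb : b ≠ ∞) (hc : c ≠ ∞) (hβ : β < 1) :
    ∃ δ : ℝ, 0 < δ ∧ ∃ C ≠ ∞, C * (b ^ δ * β) + c ^ δ ≤ C := by
  obtain ⟨δ, hδ, hbβ⟩ : ∃ δ : ℝ, 0 < δ ∧ b ^ δ * β < 1 := by
    have h_pow := (ENNReal.tendsto_pow_atTop_nhds_top_iff.2 (ENNReal.one_lt_inv.2 hβ)).eventually
      (lt_mem_nhds hb.lt_top)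
    obtain ⟨N, hN, hN₀⟩ := (h_pow.and (Filter.eventually_gt_atTop 0)).exists
    have hN₀ : (0 : ℝ) < N := mod_cast hN₀
    refine ⟨(N : ℝ)⁻¹, by positivity, ENNReal.mul_lt_of_lt_div ?_⟩
    rwa [one_div, ENNReal.rpow_inv_lt_iff hN₀, ENNReal.rpow_natCast]
  have h_sub : 1 - b ^ δ * β ≠ 0 := (tsub_pos_of_lt hbβ).ne'
  refine ⟨δ, hδ, c ^ δ * (1 - b ^ δ * β)⁻¹, ?_, le_of_eq ?_⟩
  · exact ENNReal.mul_ne_top (ENNReal.rpow_ne_top_of_nonneg hδ.le hc) (ENNReal.inv_ne_top.2 h_sub)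
  set C := c ^ δ * (1 - b ^ δ * β)⁻¹ with hC
  have hcC : c ^ δ = C * (1 - b ^ δ * β) := by
    rw [hC, mul_assoc, ENNReal.inv_mul_cancel h_sub (by finiteness), mul_one]
  rw [hcC, ← mul_add, add_tsub_cancel_of_le hbβ.le, mul_one]

/-! ### Dyadic cubes -/

/-- The half-open cube with lower corner `a` and side length `l`. -/
def cube (a : Fin n → ℝ) (l : ℝ) : Set (Fin n → ℝ) := {x | ∀ i, a i ≤ x i ∧ x i < a i + l}

lemma isCube_cube (a : Fin n → ℝ) {l : ℝ} (hl : 0 < l) : IsCube (cube a l) := ⟨a, l, hl, rfl⟩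

lemma cube_eq_pi_Ico (a : Fin n → ℝ) (l : ℝ) :
    cube a l = Set.univ.pi fun i => Set.Ico (a i) (a i + l) := by
  simp [cube, Set.pi]

lemma volume_cube (a : Fin n → ℝ) (l : ℝ) : volume (cube a l) = ENNReal.ofReal l ^ n := by
  simp [cube_eq_pi_Ico, Real.volume_pi_Ico]

lemma cube_ae_eq_closedBall (a : Fin n → ℝ) {l : ℝ} (hl : 0 ≤ l) :
    cube a l =ᵐ[volume] Metric.closedBall (fun i => a i + l / 2) (l / 2) := by
  have h_ball : Metric.closedBall (fun i => a i + l / 2) (l / 2) = Set.Icc a fun i => a i + l := by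
    rw [closedBall_pi _ (by positivity), ← Set.pi_univ_Icc]
    simp only [Real.closedBall_eq_Icc, add_sub_cancel_right, add_assoc, add_halves]
  rw [h_ball, cube_eq_pi_Ico]
  exact Measure.univ_pi_Ico_ae_eq_Icc

namespace IsCube

variable {Q : Set (Fin n → ℝ)}

lemma volume_ne_zero (hQ : IsCube Q) : volume Q ≠ 0 := by
  obtain ⟨a, l, hl, rfl⟩ := hQ
  exact (volume_cube a l).trans_ne (pow_ne_zero _ (ENNReal.ofReal_pos.2 hl).ne')

lemma volume_ne_top (hQ : IsCube Q) : volume Q ≠ ∞ := by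
  obtain ⟨a, l, -, rfl⟩ := hQ
  exact (volume_cube a l).trans_ne (ENNReal.pow_ne_top ENNReal.ofReal_ne_top)

lemma volume_mul_eavg (hQ : IsCube Q) (f : (Fin n → ℝ) → ℝ≥0∞) :
    volume Q * eavg Q f = ∫⁻ x in Q, f x :=
  ENNReal.mul_div_cancel hQ.volume_ne_zero hQ.volume_ne_top

lemma eavg_ne_zero (hQ : IsCube Q) {f : (Fin n → ℝ) → ℝ≥0∞} (hf : Measurable f)
    (hf_pos : ∀ᵐ x, 0 < f x) : eavg Q f ≠ 0 := by
  refine (ENNReal.div_pos (ne_of_gt ?_) hQ.volume_ne_top).ne'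
  rw [setLIntegral_pos_iff hf, Set.inter_comm,
    measure_inter_conull' (measure_mono_null (fun x hx => ?_) hf_pos)]
  · exact hQ.volume_ne_zero.bot_lt
  · simpa using hx.2

end IsCube

/-- The dyadic grid generated by the cube with lower corner `a` and side length `l`: the cells of
generation `k` are the half-open cubes of side length `l / 2 ^ k` with corners in
`a + (l / 2 ^ k) ℤⁿ`. -/
def dyadicGrid (a : Fin n → ℝ) (l : ℝ) : NestedPartition (Fin n → ℝ) (Fin n → ℤ) where
  index k x i := ⌊2 ^ k * ((x i - a i) / l)⌋
  measurableSet_fiber k j := by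
    have h_index : Measurable fun (x : Fin n → ℝ) i => ⌊2 ^ k * ((x i - a i) / l)⌋ := by fun_prop
    exact h_index (measurableSet_singleton j)
  index_eq_of_succ {k x y} h := by
    have h_floor (z : Fin n → ℝ) (i : Fin n) :
        ⌊2 ^ k * ((z i - a i) / l)⌋ = ⌊2 ^ (k + 1) * ((z i - a i) / l)⌋ / (2 : ℕ) := by
      rw [← Int.floor_div_natCast]
      congr 1
      push_cast
      ring
    funext i
    rw [h_floor y, h_floor x, congrFun h i]

section DyadicGrid

variable {a : Fin n → ℝ} {l : ℝ}

lemma cell_dyadicGrid (hl : 0 < l) (k : ℕ) (x : Fin n → ℝ) :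
    (dyadicGrid a l).cell k x =
      cube (fun i => a i + (dyadicGrid a l).index k x i * (l / 2 ^ k)) (l / 2 ^ k) := by
  ext y
  change (fun i => ⌊2 ^ k * ((y i - a i) / l)⌋) = (dyadicGrid a l).index k x ↔ _
  simp only [funext_iff, Int.floor_eq_iff, cube, Set.mem_ofPred_eq]
  have h_scale (i : Fin n) : y i = a i + 2 ^ k * ((y i - a i) / l) * (l / 2 ^ k) := by
    field_simp
    ring
  refine forall_congr' fun i => and_congr ?_ ?_
  · conv_rhs => rw [h_scale i]
    rw [add_le_add_iff_left, mul_le_mul_iff_left₀ (by positivity)]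
  · conv_rhs => rw [h_scale i]
    rw [add_assoc, ← add_one_mul, add_lt_add_iff_left, mul_lt_mul_iff_left₀ (by positivity)]

lemma cell_dyadicGrid_zero (hl : 0 < l) : (dyadicGrid a l).cell 0 a = cube a l := by
  have h_index : (dyadicGrid a l).index 0 a = 0 := by
    ext i
    simp [dyadicGrid]
  simp [cell_dyadicGrid hl, h_index]

lemma isCube_cell_dyadicGrid (hl : 0 < l) (k : ℕ) (x : Fin n → ℝ) :
    IsCube ((dyadicGrid a l).cell k x) := by
  rw [cell_dyadicGrid hl]
  exact isCube_cube _ (by positivity)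

lemma volume_cell_dyadicGrid (hl : 0 < l) (k : ℕ) (x : Fin n → ℝ) :
    volume ((dyadicGrid a l).cell k x) = 2 ^ n * volume ((dyadicGrid a l).cell (k + 1) x) := by
  have h_half : l / 2 ^ k = 2 * (l / 2 ^ (k + 1)) := by
    rw [pow_succ]
    field_simp
  rw [cell_dyadicGrid hl, cell_dyadicGrid hl, volume_cube, volume_cube, h_half,
    ENNReal.ofReal_mul zero_le_two, mul_pow, ENNReal.ofReal_ofNat]

lemma ae_tendsto_measure_cell_dyadicGrid_div (hl : 0 < l) (ρ : Measure (Fin n → ℝ))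
    [IsLocallyFiniteMeasure ρ] (hρ : ρ ≪ volume) : ∀ᵐ x, Filter.Tendsto
      (fun k => ρ ((dyadicGrid a l).cell k x) / volume ((dyadicGrid a l).cell k x))
      Filter.atTop (nhds (ρ.rnDeriv volume x)) := by
  have h_radius : Filter.Tendsto (fun k : ℕ => l / 2 ^ k / 2) Filter.atTop
      (nhdsWithin 0 (Set.Ioi 0)) := by
    refine tendsto_nhdsWithin_iff.2 ⟨?_, Filter.Eventually.of_forall fun k => ?_⟩
    · simpa using (tendsto_const_nhds.div_atTop
        (tendsto_pow_atTop_atTop_of_one_lt (one_lt_two (α := ℝ)))).div_const 2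
    · exact Set.mem_Ioi.2 (by positivity)
  filter_upwards [(IsUnifLocDoublingMeasure.vitaliFamily volume 1).ae_tendsto_rnDeriv ρ] with x hx
  let center (k : ℕ) (i : Fin n) : ℝ :=
    a i + (dyadicGrid a l).index k x i * (l / 2 ^ k) + l / 2 ^ k / 2
  have h_ball (k : ℕ) :
      (dyadicGrid a l).cell k x =ᵐ[volume] Metric.closedBall (center k) (l / 2 ^ k / 2) := by
    rw [cell_dyadicGrid hl]
    exact cube_ae_eq_closedBall _ (by positivity)
  have h_mem (k : ℕ) : x ∈ Metric.closedBall (center k) (1 * (l / 2 ^ k / 2)) := by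
    have hxk := (dyadicGrid a l).mem_cell_self k x
    rw [cell_dyadicGrid hl] at hxk
    rw [one_mul, closedBall_pi _ (by positivity)]
    simp only [Set.mem_univ_pi, Real.closedBall_eq_Icc, Set.mem_Icc, center]
    exact fun i => ⟨by linarith [(hxk i).1], by linarith [(hxk i).2]⟩
  refine (hx.comp (IsUnifLocDoublingMeasure.tendsto_closedBall_filterAt volume center _ h_radius
    (Filter.Eventually.of_forall h_mem))).congr fun k => ?_
  rw [Function.comp_apply, measure_congr (h_ball k), measure_congr (hρ.ae_eq (h_ball k))]

end DyadicGrid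

lemma isLocallyFiniteMeasure_withDensity {f : (Fin n → ℝ) → ℝ≥0∞}
    (hf : ∀ Q, IsCube Q → ∫⁻ x in Q, f x < ∞) :
    IsLocallyFiniteMeasure (volume.withDensity f) := by
  refine ⟨fun x => ⟨Metric.ball x 1, Metric.ball_mem_nhds x one_pos, ?_⟩⟩
  have h_sub : Metric.ball x 1 ⊆ cube (fun i => x i - 1) 2 := fun y hy i => by
    have := abs_lt.1 ((dist_pi_lt_iff one_pos).1 hy i)
    exact ⟨by linarith, by linarith⟩
  rw [withDensity_apply _ measurableSet_ball]
  exact (lintegral_mono_set h_sub).trans_lt (hf _ (isCube_cube _ two_pos))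

lemma ae_tendsto_cellAverage_dyadicGrid {a : Fin n → ℝ} {l : ℝ} (hl : 0 < l)
    {f : (Fin n → ℝ) → ℝ≥0∞} (hf : Measurable f) (hf_loc : ∀ Q, IsCube Q → ∫⁻ x in Q, f x < ∞) :
    ∀ᵐ x, Filter.Tendsto ((dyadicGrid a l).cellAverage volume f · x) Filter.atTop (nhds (f x)) := by
  have := isLocallyFiniteMeasure_withDensity hf_loc
  filter_upwards [
    ae_tendsto_measure_cell_dyadicGrid_div hl _ (withDensity_absolutelyContinuous volume f),
    Measure.rnDeriv_withDensity volume hf] with x hx hfx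
  rw [hfx] at hx
  refine hx.congr fun k => ?_
  rw [withDensity_apply _ ((dyadicGrid a l).measurableSet_cell k x), NestedPartition.cellAverage,
    setLAverage_eq]

lemma rhConst_le_iff {s : ℝ} {f : (Fin n → ℝ) → ℝ≥0∞} {C : ℝ≥0∞} : RHConst s f ≤ C ↔
    ∀ Q, IsCube Q → eavg Q (f · ^ s) ^ (1 / s) / eavg Q f ≤ C :=
  iSup₂_le_iff

theorem exists_memRH_of_aInftyOn {f : (Fin n → ℝ) → ℝ≥0∞} {c β : ℝ≥0∞} (hf : Measurable f)
    (hf_loc : ∀ Q, IsCube Q → ∫⁻ x in Q, f x < ∞) (hc : 1 ≤ c) (hc_top : c ≠ ∞) (hβ : β < 1)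
    (hfA : ∀ Q, IsCube Q → AInftyOn volume f c β Q) : ∃ s, 1 < s ∧ MemRH s f := by
  obtain ⟨δ, hδ, C, hC_top, hC⟩ := exists_pos_mul_rpow_mul_add_rpow_le (b := 2 ^ n * c)
    (by finiteness) hc_top hβ
  have hs : 0 < 1 + δ := by positivity
  refine ⟨1 + δ, by linarith, lt_of_le_of_lt (b := C ^ (1 / (1 + δ))) ?_ ?_⟩
  · refine rhConst_le_iff.2 fun Q ⟨a, l, hl, hQ⟩ => ENNReal.div_le_of_le_mul ?_
    have h_rpow : eavg Q (f · ^ (1 + δ)) ≤ C * eavg Q f ^ (1 + δ) := by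
      obtain rfl : Q = (dyadicGrid a l).cell 0 a := hQ.trans (cell_dyadicGrid_zero hl).symm
      simp only [eavg, ← setLAverage_eq]
      exact (dyadicGrid a l).setLAverage_rpow_le
        (fun k x => (isCube_cell_dyadicGrid hl k x).volume_ne_top)
        (fun k x => (volume_cell_dyadicGrid hl k x).le) hf hδ.le hc
        (fun k x => hfA _ (isCube_cell_dyadicGrid hl k x)) hC
        (ae_tendsto_cellAverage_dyadicGrid hl hf hf_loc)
    calc eavg Q (f · ^ (1 + δ)) ^ (1 / (1 + δ)) ≤ (C * eavg Q f ^ (1 + δ)) ^ (1 / (1 + δ)) := by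
          gcongr
      _ = C ^ (1 / (1 + δ)) * eavg Q f := by
          rw [ENNReal.mul_rpow_of_nonneg _ _ (by positivity), one_div,
            ENNReal.rpow_rpow_inv hs.ne']
  · exact ENNReal.rpow_lt_top_of_nonneg (by positivity) hC_top

/-! ### Muckenhoupt weights -/

lemma setLIntegral_le_one_sub_inv_mul {X : Type*} [MeasurableSpace X] {μ : Measure X}
    {f : X → ℝ≥0∞} {Q E : Set X} {K : ℝ≥0∞} (hE : MeasurableSet E) (hEQ : E ⊆ Q)
    (h_top : ∫⁻ x in Q, f x ∂μ ≠ ∞)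
    (hK : ∫⁻ x in Q, f x ∂μ ≤ K * ∫⁻ x in Q \ E, f x ∂μ) :
    ∫⁻ x in E, f x ∂μ ≤ (1 - K⁻¹) * ∫⁻ x in Q, f x ∂μ := by
  have h_split : ∫⁻ x in E, f x ∂μ + ∫⁻ x in Q \ E, f x ∂μ = ∫⁻ x in Q, f x ∂μ := by
    rw [← lintegral_inter_add_sdiff f Q hE, Set.inter_eq_right.2 hEQ]
  have h_diff : K⁻¹ * ∫⁻ x in Q, f x ∂μ ≤ ∫⁻ x in Q \ E, f x ∂μ := by
    rw [mul_comm]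
    exact ENNReal.div_le_of_le_mul' hK
  rw [ENNReal.sub_mul fun _ _ => h_top, one_mul]
  refine ENNReal.le_sub_of_add_le_right (ne_top_of_le_ne_top h_top ?_) ?_
  · exact h_diff.trans (lintegral_mono_set Set.sdiff_subset)
  · exact (add_le_add_right h_diff _).trans h_split.le

lemma measure_le_two_mul_measure_sdiff {X : Type*} [MeasurableSpace X] {μ : Measure X}
    {Q E : Set X} (hE : MeasurableSet E) (hEQ : E ⊆ Q) (h_top : μ E ≠ ∞) (h : 2 * μ E ≤ μ Q) :
    μ Q ≤ 2 * μ (Q \ E) := by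
  have h_split : μ E + μ (Q \ E) = μ Q := by
    rw [← measure_inter_add_sdiff Q hE, Set.inter_eq_right.2 hEQ]
  have h_le : μ E ≤ μ (Q \ E) := by
    rw [← h_split, two_mul] at h
    exact (ENNReal.add_le_add_iff_left h_top).1 h
  rw [← h_split, two_mul]
  gcongr

/-- The dual weight `w ^ (1 - p')`, with `p' = p / (p - 1)`, in terms of which the `A_p` condition
reads `⨍_Q w * (⨍_Q dualWeight p w) ^ (p - 1) ≤ C`. -/
def dualWeight {X : Type*} (p : ℝ) (w : X → ℝ≥0∞) (x : X) : ℝ≥0∞ := w x ^ (1 - p / (p - 1))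

section DualWeight

variable {X : Type*} {p q s : ℝ} {w : X → ℝ≥0∞}

lemma dualWeight_dualWeight (hpq : p.HolderConjugate q) : dualWeight q (dualWeight p w) = w := by
  funext x
  have h_exp : (1 - q) * (1 - p) = 1 := by linarith [hpq.sub_one_mul_conj]
  rw [dualWeight, dualWeight, ← hpq.conjugate_eq, ← hpq.symm.conjugate_eq, ← ENNReal.rpow_mul,
    h_exp, ENNReal.rpow_one]

lemma dualWeight_rpow (hp : 1 < p) (hs : 0 < s) (x : X) :
    dualWeight p w x ^ s = dualWeight (1 + (p - 1) / s) w x := by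
  rw [dualWeight, dualWeight, ← ENNReal.rpow_mul]
  congr 1
  have hp₁ : p - 1 ≠ 0 := by linarith
  rw [add_sub_cancel_left]
  field_simp
  ring

variable [MeasurableSpace X] {μ : Measure X}

lemma measurable_dualWeight (hw : Measurable w) : Measurable (dualWeight p w) :=
  hw.pow_const _

lemma ae_dualWeight_pos_lt_top (hw : ∀ᵐ x ∂μ, 0 < w x ∧ w x < ∞) :
    ∀ᵐ x ∂μ, 0 < dualWeight p w x ∧ dualWeight p w x < ∞ :=
  hw.mono fun _ hx =>
    ⟨ENNReal.rpow_pos hx.1 hx.2.ne, (ENNReal.rpow_ne_top_of_ne_zero hx.1.ne' hx.2.ne).lt_top⟩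

lemma measure_univ_rpow_le_lintegral_mul_lintegral_dualWeight (hp : 1 < p)
    (hw : AEMeasurable w μ) (hw_pos : ∀ᵐ x ∂μ, 0 < w x ∧ w x < ∞) :
    μ Set.univ ^ p ≤ (∫⁻ x, w x ∂μ) * (∫⁻ x, dualWeight p w x ∂μ) ^ (p - 1) := by
  have hp₀ : 0 < p := one_pos.trans hp
  have hpq := Real.HolderConjugate.conjExponent hp
  set q := p.conjExponent
  have h_holder := ENNReal.lintegral_mul_le_Lp_mul_Lq μ hpq
    (hw.pow_const (1 / p)) (hw.pow_const (-(1 / p)))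
  have h_one : ∫⁻ x, ((w · ^ (1 / p)) * (w · ^ (-(1 / p)))) x ∂μ = μ Set.univ := by
    rw [← lintegral_one]
    refine lintegral_congr_ae (hw_pos.mono fun x hx => ?_)
    simp [← ENNReal.rpow_add _ _ hx.1.ne' hx.2.ne]
  have h_left (x : X) : (w x ^ (1 / p)) ^ p = w x := by
    rw [one_div, ENNReal.rpow_inv_rpow hp₀.ne']
  have h_right (x : X) : (w x ^ (-(1 / p))) ^ q = dualWeight p w x := by
    rw [← ENNReal.rpow_mul, dualWeight, ← hpq.conjugate_eq]
    congr 1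
    field_simp
    linarith [hpq.sub_one_mul_conj]
  simp only [h_one, h_left, h_right] at h_holder
  have h_exp : 1 / q * p = p - 1 := by
    rw [one_div_mul_eq_div, div_eq_iff hpq.symm.ne_zero, hpq.sub_one_mul_conj]
  calc μ Set.univ ^ p
      ≤ ((∫⁻ x, w x ∂μ) ^ (1 / p) * (∫⁻ x, dualWeight p w x ∂μ) ^ (1 / q)) ^ p := by
        gcongr
    _ = (∫⁻ x, w x ∂μ) * (∫⁻ x, dualWeight p w x ∂μ) ^ (p - 1) := by
        rw [ENNReal.mul_rpow_of_nonneg _ _ hp₀.le, one_div, ENNReal.rpow_inv_rpow hp₀.ne',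
          ← ENNReal.rpow_mul, h_exp]

end DualWeight

section Muckenhoupt

variable {p q s : ℝ} {w : (Fin n → ℝ) → ℝ≥0∞} {Q E : Set (Fin n → ℝ)} {C : ℝ≥0∞}

lemma apConst_le_iff (hp : p ≠ 1) : ApConst p w ≤ C ↔
    ∀ Q, IsCube Q → eavg Q w * eavg Q (dualWeight p w) ^ (p - 1) ≤ C := by
  rw [ApConst, if_neg hp, iSup₂_le_iff]
  rfl

lemma eavg_mul_eavg_dualWeight_rpow_le (hp : p ≠ 1) (hQ : IsCube Q) :
    eavg Q w * eavg Q (dualWeight p w) ^ (p - 1) ≤ ApConst p w :=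
  (apConst_le_iff hp).1 le_rfl Q hQ

lemma eavg_dualWeight_ne_top (hp : 1 < p) (hw : IsWeight w) (hwp : MemAp p w) (hQ : IsCube Q) :
    eavg Q (dualWeight p w) ≠ ∞ := fun h_top => by
  have h_le := eavg_mul_eavg_dualWeight_rpow_le (w := w) hp.ne' hQ
  rw [h_top, ENNReal.top_rpow_of_pos (sub_pos.2 hp),
    ENNReal.mul_top (hQ.eavg_ne_zero hw.1 (hw.2.1.mono fun _ hx => hx.1)), top_le_iff] at h_le
  exact hwp.ne h_le

lemma isWeight_dualWeight (hp : 1 < p) (hw : IsWeight w) (hwp : MemAp p w) :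
    IsWeight (dualWeight p w) := by
  refine ⟨measurable_dualWeight hw.1, ae_dualWeight_pos_lt_top hw.2.1, fun Q hQ => ?_⟩
  rw [← hQ.volume_mul_eavg]
  exact ENNReal.mul_lt_top hQ.volume_ne_top.lt_top (eavg_dualWeight_ne_top hp hw hwp hQ).lt_top

lemma memAp_dualWeight (hpq : p.HolderConjugate q) (hwp : MemAp p w) :
    MemAp q (dualWeight p w) := by
  have h_exp : (p - 1) * (q - 1) = 1 := by linarith [hpq.sub_one_mul_conj]
  refine lt_of_le_of_lt (b := ApConst p w ^ (q - 1)) ?_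
    (ENNReal.rpow_lt_top_of_nonneg (sub_nonneg.2 hpq.symm.lt.le) hwp.ne)
  refine (apConst_le_iff hpq.symm.lt.ne').2 fun Q hQ => ?_
  rw [dualWeight_dualWeight hpq]
  calc eavg Q (dualWeight p w) * eavg Q w ^ (q - 1)
      = (eavg Q w * eavg Q (dualWeight p w) ^ (p - 1)) ^ (q - 1) := by
        rw [ENNReal.mul_rpow_of_nonneg _ _ (sub_nonneg.2 hpq.symm.lt.le), ← ENNReal.rpow_mul,
          h_exp, ENNReal.rpow_one, mul_comm]
    _ ≤ ApConst p w ^ (q - 1) := by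
        gcongr
        · exact sub_nonneg.2 hpq.symm.lt.le
        · exact eavg_mul_eavg_dualWeight_rpow_le hpq.lt.ne' hQ

lemma setLIntegral_mul_setLIntegral_dualWeight_rpow_le (hp : 1 < p) (hQ : IsCube Q) :
    (∫⁻ x in Q, w x) * (∫⁻ x in Q, dualWeight p w x) ^ (p - 1) ≤ ApConst p w * volume Q ^ p := by
  have h_vol : volume Q ^ p = volume Q * volume Q ^ (p - 1) := by
    rw [← add_sub_cancel 1 p, ENNReal.rpow_add_of_nonneg _ _ zero_le_one (sub_nonneg.2 hp.le),
      ENNReal.rpow_one, add_sub_cancel]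
  calc (∫⁻ x in Q, w x) * (∫⁻ x in Q, dualWeight p w x) ^ (p - 1)
      = eavg Q w * eavg Q (dualWeight p w) ^ (p - 1) * volume Q ^ p := by
        rw [← hQ.volume_mul_eavg, ← hQ.volume_mul_eavg,
          ENNReal.mul_rpow_of_nonneg _ _ (sub_nonneg.2 hp.le), h_vol]
        ring
    _ ≤ ApConst p w * volume Q ^ p := by
        gcongr
        exact eavg_mul_eavg_dualWeight_rpow_le hp.ne' hQ

lemma volume_rpow_mul_setLIntegral_le (hp : 1 < p) (hw : IsWeight w) (hQ : IsCube Q)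
    (hEQ : E ⊆ Q) :
    volume E ^ p * ∫⁻ x in Q, w x ≤ ApConst p w * volume Q ^ p * ∫⁻ x in E, w x := by
  have h_holder := measure_univ_rpow_le_lintegral_mul_lintegral_dualWeight
    (μ := volume.restrict E) hp hw.1.aemeasurable (ae_restrict_of_ae hw.2.1)
  rw [Measure.restrict_apply_univ] at h_holder
  calc volume E ^ p * ∫⁻ x in Q, w x
      ≤ (∫⁻ x in E, w x) * (∫⁻ x in E, dualWeight p w x) ^ (p - 1) * ∫⁻ x in Q, w x := by gcongr
    _ ≤ (∫⁻ x in E, w x) * (∫⁻ x in Q, dualWeight p w x) ^ (p - 1) * ∫⁻ x in Q, w x := by gcongr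
    _ = (∫⁻ x in Q, w x) * (∫⁻ x in Q, dualWeight p w x) ^ (p - 1) * ∫⁻ x in E, w x := by ring
    _ ≤ ApConst p w * volume Q ^ p * ∫⁻ x in E, w x := by
        gcongr ?_ * _
        exact setLIntegral_mul_setLIntegral_dualWeight_rpow_le hp hQ

lemma IsWeight.aInftyOn (hw : IsWeight w) (hp : 1 < p) (hQ : IsCube Q) :
    AInftyOn volume w 2 (1 - (2 ^ p * ApConst p w)⁻¹) Q := by
  intro E hEQ hE hE_half
  have hp₀ : 0 ≤ p := zero_le_one.trans hp.le
  refine setLIntegral_le_one_sub_inv_mul hE hEQ (hw.2.2 Q hQ).ne ?_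
  have h_vol : volume Q ≤ 2 * volume (Q \ E) := measure_le_two_mul_measure_sdiff hE hEQ
    (measure_ne_top_of_subset hEQ hQ.volume_ne_top) hE_half
  have h_vol_rpow : volume Q ^ p ≠ 0 := by
    simp [ENNReal.rpow_eq_zero_iff, hQ.volume_ne_zero, hQ.volume_ne_top]
  refine (ENNReal.mul_le_mul_iff_right h_vol_rpow
    (ENNReal.rpow_ne_top_of_nonneg hp₀ hQ.volume_ne_top)).1 ?_
  calc volume Q ^ p * ∫⁻ x in Q, w x
      ≤ (2 * volume (Q \ E)) ^ p * ∫⁻ x in Q, w x := by gcongr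
    _ = 2 ^ p * (volume (Q \ E) ^ p * ∫⁻ x in Q, w x) := by
        rw [ENNReal.mul_rpow_of_nonneg _ _ hp₀, mul_assoc]
    _ ≤ 2 ^ p * (ApConst p w * volume Q ^ p * ∫⁻ x in Q \ E, w x) := by
        gcongr 2 ^ p * ?_
        exact volume_rpow_mul_setLIntegral_le hp hw hQ Set.sdiff_subset
    _ = volume Q ^ p * (2 ^ p * ApConst p w * ∫⁻ x in Q \ E, w x) := by ring

theorem exists_memRH_of_memAp (hp : 1 < p) (hw : IsWeight w) (hwp : MemAp p w) :
    ∃ s, 1 < s ∧ MemRH s w := by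
  refine exists_memRH_of_aInftyOn hw.1 hw.2.2 one_le_two ENNReal.ofNat_ne_top ?_
    fun Q hQ => hw.aInftyOn hp hQ
  exact ENNReal.sub_lt_self ENNReal.one_ne_top one_ne_zero
    (ENNReal.inv_ne_zero.2 (ENNReal.mul_ne_top (by finiteness) hwp.ne))

theorem memAp_of_memRH_dualWeight (hp : 1 < p) (hw : IsWeight w) (hwp : MemAp p w) (hs : 0 < s)
    (hσ : MemRH s (dualWeight p w)) : MemAp (1 + (p - 1) / s) w := by
  set σ := dualWeight p w
  set R := RHConst s σ
  have hp₁ : 0 < p - 1 := sub_pos.2 hp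
  have h_rh (Q) (hQ : IsCube Q) : eavg Q (σ · ^ s) ^ (1 / s) ≤ R * eavg Q σ := by
    rw [← ENNReal.div_le_iff_le_mul (.inr hσ.ne) (.inl (eavg_dualWeight_ne_top hp hw hwp hQ))]
    exact rhConst_le_iff.1 le_rfl Q hQ
  refine lt_of_le_of_lt (b := R ^ (p - 1) * ApConst p w) ?_
    (ENNReal.mul_lt_top (ENNReal.rpow_lt_top_of_nonneg hp₁.le hσ.ne) hwp)
  refine (apConst_le_iff (by simp [hp₁.ne', hs.ne'])).2 fun Q hQ => ?_
  have h_exp : 1 + (p - 1) / s - 1 = 1 / s * (p - 1) := by ring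
  calc eavg Q w * eavg Q (dualWeight (1 + (p - 1) / s) w) ^ (1 + (p - 1) / s - 1)
      = eavg Q w * (eavg Q (σ · ^ s) ^ (1 / s)) ^ (p - 1) := by
        simp only [σ, dualWeight_rpow hp hs]
        rw [h_exp, ENNReal.rpow_mul]
    _ ≤ eavg Q w * (R * eavg Q σ) ^ (p - 1) := by
        gcongr
        exact h_rh Q hQ
    _ = R ^ (p - 1) * (eavg Q w * eavg Q σ ^ (p - 1)) := by
        rw [ENNReal.mul_rpow_of_nonneg _ _ hp₁.le]
        ring
    _ ≤ R ^ (p - 1) * ApConst p w := by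
        gcongr
        exact eavg_mul_eavg_dualWeight_rpow_le hp.ne' hQ

end Muckenhoupt

/-- If `1 < p < ∞` and `w ∈ A_p`, then there exists `0 < ε < p - 1`
such that `w ∈ A_{p-ε}`. -/
theorem statement4 (n : ℕ) (p : ℝ) (hp : 1 < p) (w : (Fin n → ℝ) → ℝ≥0∞)
    (hw : IsWeight w) (hwp : MemAp p w) :
    ∃ ε : ℝ, 0 < ε ∧ ε < p - 1 ∧ MemAp (p - ε) w := by
  have hpq := Real.HolderConjugate.conjExponent hp
  obtain ⟨s, hs, hσ⟩ : ∃ s, 1 < s ∧ MemRH s (dualWeight p w) :=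
    exists_memRH_of_memAp hpq.symm.lt (isWeight_dualWeight hp hw hwp) (memAp_dualWeight hpq hwp)
  have hp₁ : 0 < p - 1 := sub_pos.2 hp
  have hs₀ : 0 < s := one_pos.trans hs
  refine ⟨(p - 1) - (p - 1) / s, sub_pos.2 (div_lt_self hp₁ hs),
    sub_lt_self _ (div_pos hp₁ hs₀), ?_⟩
  convert memAp_of_memRH_dualWeight hp hw hwp hs₀ hσ using 1
  ring
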